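/- There exists a (96,8)-separable permutation code of length 96 and minimum distance 95; that is, there is a subset C of the symmetric group on Fin 96 of cardinality 8·96 = 768 which is the disjoint union of 8 sets L₁,…,L₈, each of cardinality 96, such that any two distinct permutations in the same L_i are at Hamming distance 96, and any two permutations in different blocks L_i, L_j are at Hamming distance 95. -/

import Mathlib

/-- Hamming distance between two permutations of `Fin n`:
the number of points where they differ. -/
def permHammingDist {n : ℕ} (σ τ : Equiv.Perm (Fin n)) : ℕ :=
  (Finset.univ.filter fun x => σ x ≠ τ x).card

/-!
A difference matrix over a group `G` is a family of rows `X → G` such that the difference of any two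
rows is a bijection. Subtracting one row from all the others leaves bijections `f i : X → G` whose
pairwise differences are still bijections. The translates `x ↦ g + f i x` with `i` fixed agree
nowhere, while `g + f i x = h + f j x` says `f i x - f j x = -g + h`, which has exactly one solution
`x`. So the translates of each `f i` form one block of a separable permutation code.

It remains to find a difference matrix with nine rows over a group of order 96. We take
`G = ℤ/3 × 𝔽₄ × 𝔽₄ × 𝔽₂` and impose two symmetries: the columns are permuted by a group
`V = 𝔽₄ × 𝔽₂` of order eight, which changes row `i` by the homomorphism `V → G` attached to it, and
multiplication by `ω ∈ 𝔽₄` permutes rows and columns in cycles of length three. Up to these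
symmetries only three rows and four columns are left, and these were found by computer.
-/

open Equiv Function Finset

section HammingDist

variable {X Y : Type*} [Fintype X] [DecidableEq Y] {f g : X → Y}

lemma hammingDist_eq_card_of_forall_ne (h : ∀ x, f x ≠ g x) :
    hammingDist f g = Fintype.card X := by
  simp [hammingDist, h]

lemma hammingDist_eq_card_sub_one_of_existsUnique (h : ∃! x, f x = g x) :
    hammingDist f g = Fintype.card X - 1 := by
  classical
  obtain ⟨x, hx, huniq⟩ := h
  have hdiffer : ({y | f y ≠ g y} : Finset X) = univ.erase x := by
    ext y
    simpa using not_congr ⟨huniq y, fun hyx => hyx ▸ hx⟩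
  rw [hammingDist, hdiffer, card_erase_of_mem (mem_univ x), card_univ]

end HammingDist

lemma permHammingDist_eq_hammingDist {n : ℕ} (σ τ : Perm (Fin n)) :
    permHammingDist σ τ = hammingDist σ τ :=
  rfl

/-- The blocks `L i` form an `(r, m)`-separable permutation code on `X`, where `m` is the number of
indices `i`. -/
structure IsSeparablePA {ι X : Type*} [Fintype X] [DecidableEq X] (r : ℕ)
    (L : ι → Finset (Perm X)) : Prop where
  card_block : ∀ i, #(L i) = r
  disjoint : Pairwise fun i j => Disjoint (L i) (L j)
  dist_eq_card : ∀ i, ∀ σ ∈ L i, ∀ τ ∈ L i, σ ≠ τ → hammingDist σ τ = Fintype.card X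
  dist_eq_card_sub_one : Pairwise fun i j =>
    ∀ σ ∈ L i, ∀ τ ∈ L j, hammingDist σ τ = Fintype.card X - 1

lemma IsSeparablePA.card_biUnion {ι X : Type*} [Fintype ι] [Fintype X] [DecidableEq X] {r : ℕ}
    {L : ι → Finset (Perm X)} (hL : IsSeparablePA r L) :
    #(univ.biUnion L) = Fintype.card ι * r := by
  rw [Finset.card_biUnion fun _ _ _ _ hij => hL.disjoint hij]
  simp [hL.card_block]

section TranslateBlock

variable {G X : Type*} [AddGroup G]

/-- The permutation `x ↦ g + f x`, with its value identified with a point through `e`. -/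
def translatePerm (e : G ≃ X) (f : X ≃ G) (g : G) : Perm X :=
  f.trans ((Equiv.addLeft g).trans e)

lemma translatePerm_apply (e : G ≃ X) (f : X ≃ G) (g : G) (x : X) :
    translatePerm e f g x = e (g + f x) :=
  rfl

lemma translatePerm_injective (e : G ≃ X) (f : X ≃ G) : Injective (translatePerm e f) := by
  intro g h hgh
  simpa [translatePerm_apply] using Equiv.congr_fun hgh (f.symm 0)

/-- The block of all translates of `f`. -/
def translateBlock [Fintype G] (e : G ≃ X) (f : X ≃ G) : Finset (Perm X) :=
  univ.map ⟨translatePerm e f, translatePerm_injective e f⟩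

lemma mem_translateBlock [Fintype G] {e : G ≃ X} {f : X ≃ G} {σ : Perm X} :
    σ ∈ translateBlock e f ↔ ∃ g, translatePerm e f g = σ := by
  simp [translateBlock]

variable [Fintype X] [DecidableEq X]

lemma hammingDist_translatePerm_of_ne (e : G ≃ X) (f : X ≃ G) {g h : G} (hgh : g ≠ h) :
    hammingDist (translatePerm e f g) (translatePerm e f h) = Fintype.card X :=
  hammingDist_eq_card_of_forall_ne fun x => by simpa [translatePerm_apply] using hgh

lemma hammingDist_translatePerm_of_bijective_sub (e : G ≃ X) {f f' : X ≃ G}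
    (hff' : Bijective fun x => f x - f' x) (g h : G) :
    hammingDist (translatePerm e f g) (translatePerm e f' h) = Fintype.card X - 1 := by
  apply hammingDist_eq_card_sub_one_of_existsUnique
  have hagree (x : X) : translatePerm e f g x = translatePerm e f' h x ↔ f x - f' x = -g + h := by
    rw [translatePerm_apply, translatePerm_apply, e.apply_eq_iff_eq, sub_eq_iff_eq_add, add_assoc,
      eq_neg_add_iff_add_eq]
  simpa only [hagree] using hff'.existsUnique (-g + h)

theorem isSeparablePA_translateBlock [Fintype G] [Nontrivial X] {ι : Type*} (e : G ≃ X)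
    {f : ι → X ≃ G} (hf : Pairwise fun i j => Bijective fun x => f i x - f j x) :
    IsSeparablePA (Fintype.card G) fun i => translateBlock e (f i) := by
  have hdist : Pairwise fun i j => ∀ σ ∈ translateBlock e (f i), ∀ τ ∈ translateBlock e (f j),
      hammingDist σ τ = Fintype.card X - 1 := by
    intro i j hij σ hσ τ hτ
    obtain ⟨g, rfl⟩ := mem_translateBlock.mp hσ
    obtain ⟨h, rfl⟩ := mem_translateBlock.mp hτ
    exact hammingDist_translatePerm_of_bijective_sub e (hf hij) g h
  refine ⟨fun i => by simp [translateBlock], fun i j hij => ?_, fun i σ hσ τ hτ hne => ?_, hdist⟩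
  · refine Finset.disjoint_left.mpr fun σ hσ hσ' => ?_
    have hzero := hdist hij σ hσ σ hσ'
    rw [hammingDist_self] at hzero
    have := Fintype.one_lt_card (α := X)
    omega
  · obtain ⟨g, rfl⟩ := mem_translateBlock.mp hσ
    obtain ⟨h, rfl⟩ := mem_translateBlock.mp hτ
    exact hammingDist_translatePerm_of_ne e (f i) fun hgh => hne (hgh ▸ rfl)

end TranslateBlock

/-- A difference matrix (of index one) over `G` with rows `D i`: the difference of any two distinct
rows is a bijection from the columns to `G`. -/
def IsDifferenceMatrix {ι κ G : Type*} [AddGroup G] (D : ι → κ → G) : Prop :=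
  Pairwise fun i j => Bijective fun x => D i x - D j x

namespace IsDifferenceMatrix

variable {ι κ G : Type*} [AddGroup G]

lemma submatrix {ι' κ' : Type*} {D : ι → κ → G} (hD : IsDifferenceMatrix D) (r : ι' ↪ ι)
    (c : κ' ≃ κ) : IsDifferenceMatrix fun i x => D (r i) (c x) :=
  fun _ _ hij => (hD (r.injective.ne hij)).comp c.bijective

theorem exists_isSeparablePA [Fintype G] [Fintype κ] [DecidableEq κ] [Nontrivial κ]
    {D : Option ι → κ → G} (hD : IsDifferenceMatrix D) (e : G ≃ κ) :
    ∃ L : ι → Finset (Perm κ), IsSeparablePA (Fintype.card G) L := by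
  let f (i : ι) : κ ≃ G := .ofBijective _ (hD (Option.some_ne_none i))
  refine ⟨_, isSeparablePA_translateBlock e (f := f) fun i j hij => ?_⟩
  simpa [f] using hD ((Option.some_injective ι).ne hij)

end IsDifferenceMatrix

lemma bijective_sub_of_equivariant {ι κ G : Type*} [AddGroup G] {D : ι → κ → G} {ρ : ι → ι}
    {τ : κ ≃ κ} {α : G ≃+ G} (hD : ∀ i x, D (ρ i) (τ x) = α (D i x)) {i j : ι}
    (hij : Bijective fun x => D i x - D j x) : Bijective fun x => D (ρ i) x - D (ρ j) x := by
  rw [← τ.bijective.of_comp_iff]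
  simpa only [comp_def, hD, ← map_sub] using α.bijective.comp hij

lemma bijective_add_addMonoidHom {B V G : Type*} [AddCommGroup G] [AddGroup V] [Fintype B]
    [Fintype V] [Fintype G] (hcard : Fintype.card B * Fintype.card V = Fintype.card G) {c : B → G}
    {L : V →+ G} (hL : Injective L) (hc : ∀ b b' v, c b - c b' = L v → b = b') :
    Bijective fun x : B × V => c x.1 + L x.2 := by
  rw [Fintype.bijective_iff_injective_and_card, Fintype.card_prod]
  refine ⟨?_, hcard⟩
  rintro ⟨b, v⟩ ⟨b', v'⟩ (heq : c b + L v = c b' + L v')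
  obtain rfl : b = b' := hc b b' (v' - v) (by
    rw [map_sub, sub_eq_sub_iff_add_eq_add, heq, add_comm])
  rw [hL (add_left_cancel heq)]

/-- The additive group of the field with four elements, in coordinates with respect to the basis
`1, ω`, where `ω ^ 2 = ω + 1`. The ring structure of `ZMod 2 × ZMod 2` is not that of the field. -/
abbrev F₄ : Type := ZMod 2 × ZMod 2

/-- Multiplication by `ω` on `F₄`. -/
def mulOmega : F₄ ≃+ F₄ where
  toFun a := (a.2, a.1 + a.2)
  invFun a := (a.1 + a.2, a.1)
  left_inv := by decide
  right_inv := by decide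
  map_add' := by decide

/-- Multiplication by `ω ^ t` on `F₄`. -/
def mulOmegaPow : ZMod 3 → F₄ ≃+ F₄
  | 0 => AddEquiv.refl _
  | 1 => mulOmega
  | 2 => mulOmega.symm

/-- The group of order 96 containing the entries of the difference matrix. -/
abbrev EntryGroup : Type := ZMod 3 × F₄ × F₄ × ZMod 2

/-- The group of order eight permuting the columns of the difference matrix. -/
abbrev ShiftGroup : Type := F₄ × ZMod 2

/-- Multiplication by `ω ^ t` on the `F₄`-components of `EntryGroup`. -/
def entryRot (t : ZMod 3) : EntryGroup ≃+ EntryGroup :=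
  (AddEquiv.refl _).prodCongr
    ((mulOmegaPow t).prodCongr ((mulOmegaPow t).prodCongr (AddEquiv.refl _)))

/-- Multiplication by `ω ^ t` on the `F₄`-component of `ShiftGroup`. -/
def shiftRot (t : ZMod 3) : ShiftGroup ≃+ ShiftGroup :=
  (mulOmegaPow t).prodCongr (AddEquiv.refl _)

/-- The entries `seed q o t` in row `(o, t)` of the four generating columns of `diffMatrix96`. -/
def seed : Fin 4 → Fin 3 → ZMod 3 → EntryGroup :=
  ![![![(2, (0, 0), (0, 1), 0), (2, (0, 0), (1, 0), 0), (1, (0, 1), (0, 0), 0)],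
      ![(0, (1, 0), (0, 1), 0), (1, (0, 1), (0, 0), 0), (1, (0, 0), (0, 0), 1)],
      ![(0, (0, 0), (0, 0), 1), (2, (1, 1), (1, 1), 1), (0, (0, 0), (0, 0), 0)]],
    ![![(0, (0, 0), (0, 0), 1), (0, (0, 0), (0, 0), 0), (1, (1, 0), (1, 1), 0)],
      ![(1, (0, 1), (0, 0), 0), (1, (1, 0), (0, 0), 1), (0, (0, 0), (0, 0), 0)],
      ![(0, (0, 0), (0, 0), 0), (2, (0, 0), (1, 0), 0), (2, (0, 0), (0, 0), 0)]],
    ![![(0, (0, 0), (1, 0), 1), (0, (0, 1), (0, 0), 0), (1, (0, 0), (1, 0), 0)],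
      ![(2, (0, 0), (0, 0), 0), (0, (1, 0), (0, 0), 0), (2, (0, 0), (0, 0), 0)],
      ![(2, (1, 0), (0, 0), 0), (0, (0, 0), (1, 1), 0), (0, (0, 0), (0, 0), 0)]],
    ![![(0, (0, 0), (1, 1), 1), (0, (1, 0), (0, 0), 1), (2, (0, 1), (0, 0), 0)],
      ![(0, (0, 0), (0, 0), 1), (0, (0, 0), (0, 1), 0), (1, (1, 0), (0, 1), 1)],
      ![(0, (0, 0), (0, 0), 0), (1, (0, 1), (1, 0), 0), (0, (1, 0), (0, 0), 0)]]]

/-- The change `seedHom o v` of the entries in row `(o, 0)` when the columns are shifted by `v`. -/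
def seedHom (o : Fin 3) : ShiftGroup →+ EntryGroup where
  toFun v :=
    let ((x, y), z) := v
    ![(0, (x, 0), (z, x), x), (0, (z, y), (x, 0), x), (0, (y + z, x), (z, x), x + z)] o
  map_zero' := by decide +revert
  map_add' := by decide +revert

/-- The entry in row `i` of the column obtained from the generating column `b.1` by applying the
symmetry of order three `b.2` times. -/
def baseEntry (i : Fin 3 × ZMod 3) (b : Fin 4 × ZMod 3) : EntryGroup :=
  entryRot b.2 (seed b.1 i.1 (i.2 - b.2))

/-- The change `rowHom i v` of the entries in row `i` when the columns are shifted by `v`: that of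
row `(i.1, 0)`, conjugated by `ω ^ i.2`. -/
def rowHom (i : Fin 3 × ZMod 3) : ShiftGroup →+ EntryGroup :=
  (entryRot i.2).toAddMonoidHom.comp
    ((seedHom i.1).comp (shiftRot (-i.2)).toAddMonoidHom)

/-- A difference matrix with nine rows `(o, t)` over `EntryGroup`. Its columns are the translates by
`v` of the columns with index `b` of `baseEntry`, where the column index is `(b, v)`. -/
def diffMatrix96 (i : Fin 3 × ZMod 3) (x : (Fin 4 × ZMod 3) × ShiftGroup) : EntryGroup :=
  baseEntry i x.1 + rowHom i x.2

lemma baseEntry_add (t : ZMod 3) (i : Fin 3 × ZMod 3) (b : Fin 4 × ZMod 3) :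
    baseEntry (i + (0, t)) (b + (0, t)) = entryRot t (baseEntry i b) := by
  decide +kernel +revert

lemma rowHom_add (t : ZMod 3) (i : Fin 3 × ZMod 3) (v : ShiftGroup) :
    rowHom (i + (0, t)) (shiftRot t v) = entryRot t (rowHom i v) := by
  decide +kernel +revert

lemma diffMatrix96_add (t : ZMod 3) (i : Fin 3 × ZMod 3) (x : (Fin 4 × ZMod 3) × ShiftGroup) :
    diffMatrix96 (i + (0, t))
      (((Equiv.addRight ((0 : Fin 4), t)).prodCongr (shiftRot t).toEquiv) x) =
      entryRot t (diffMatrix96 i x) := by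
  rw [diffMatrix96, diffMatrix96, map_add, ← baseEntry_add, ← rowHom_add]
  rfl

lemma rowHom_sub_injective : ∀ (o : Fin 3) (j : Fin 3 × ZMod 3), (o, 0) ≠ j →
    Injective (rowHom (o, 0) - rowHom j) := by
  decide +kernel

lemma eq_of_baseEntry_sub_eq_rowHom_sub : ∀ (o : Fin 3) (j : Fin 3 × ZMod 3), (o, 0) ≠ j →
    ∀ b b' v, baseEntry (o, 0) b - baseEntry j b - (baseEntry (o, 0) b' - baseEntry j b') =
      (rowHom (o, 0) - rowHom j) v → b = b' := by
  decide +kernel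

lemma bijective_diffMatrix96_sub {o : Fin 3} {j : Fin 3 × ZMod 3} (hj : (o, 0) ≠ j) :
    Bijective fun x => diffMatrix96 (o, 0) x - diffMatrix96 j x := by
  simpa only [diffMatrix96, add_sub_add_comm, AddMonoidHom.sub_apply] using
    bijective_add_addMonoidHom (by simp) (rowHom_sub_injective o j hj)
      (eq_of_baseEntry_sub_eq_rowHom_sub o j hj)

theorem isDifferenceMatrix_diffMatrix96 : IsDifferenceMatrix diffMatrix96 := by
  rintro ⟨o, t⟩ j hj
  have hzero : (o, 0) ≠ j - (0, t) := by
    contrapose! hj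
    rw [← sub_add_cancel j (0, t), ← hj]
    simp
  simpa using bijective_sub_of_equivariant (diffMatrix96_add t) (bijective_diffMatrix96_sub hzero)

/-- There exists a (96,8)-separable permutation code of length 96 and minimum
distance 95: a disjoint union of 8 blocks of 96 permutations each (so 768
codewords in total), with Hamming distance 96 between distinct permutations in
the same block and Hamming distance 95 between permutations in different blocks. -/
theorem separable_PA_96_8 :
    ∃ L : Fin 8 → Finset (Equiv.Perm (Fin 96)),
      (∀ i, (L i).card = 96) ∧
      (∀ i j, i ≠ j → Disjoint (L i) (L j)) ∧
      (Finset.univ.biUnion L).card = 768 ∧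
      (∀ i, ∀ σ ∈ L i, ∀ τ ∈ L i, σ ≠ τ → permHammingDist σ τ = 96) ∧
      (∀ i j, i ≠ j → ∀ σ ∈ L i, ∀ τ ∈ L j, permHammingDist σ τ = 95) := by
  let rows : Option (Fin 8) ≃ Fin 3 × ZMod 3 := Fintype.equivOfCardEq (by simp)
  let columns : Fin 96 ≃ (Fin 4 × ZMod 3) × ShiftGroup := Fintype.equivOfCardEq (by simp)
  have hcard : Fintype.card EntryGroup = 96 := by simp
  obtain ⟨L, hL⟩ := (isDifferenceMatrix_diffMatrix96.submatrix rows.toEmbedding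
    columns).exists_isSeparablePA (Fintype.equivFinOfCardEq hcard)
  rw [hcard] at hL
  refine ⟨L, hL.card_block, fun i j hij => hL.disjoint hij, ?_, ?_, ?_⟩
  · simpa using hL.card_biUnion
  · simpa only [permHammingDist_eq_hammingDist, Fintype.card_fin] using hL.dist_eq_card
  · simpa only [permHammingDist_eq_hammingDist, Fintype.card_fin] using
      fun i j hij => hL.dist_eq_card_sub_one hij
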